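/- arXiv:1203.4026 — 4 statements merged into one kernel-verified Lean document; each statement's English description precedes it below -/
import Mathlib

section
/- The axiom of symmetry AS is equivalent to the negation of the continuum hypothesis: AS holds if and only if the cardinality of the continuum is not equal to ℵ₁. -/
open Cardinal

/-!
A set of cardinality at most `κ⁺` has a linear order whose initial segments `Iic x` have
cardinality at most `κ`; since the order is total, `x ↦ Iic x` refutes symmetry. On a larger set,
fix `A` of cardinality `κ⁺`: some `y` avoids all `f x` with `x ∈ A`, and `f y` is too small to
cover `A`. The axiom of symmetry is the case `κ = ℵ₀` on `ℝ`, where `κ⁺ ≤ #ℝ` holds already.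
-/

universe u

variable {α β : Type u} {κ : Cardinal.{u}}

theorem exists_linearOrder_mk_Iic_le (hκ : ℵ₀ ≤ κ) (hα : #α ≤ Order.succ κ) :
    ∃ _ : LinearOrder α, ∀ x : α, #(Set.Iic x) ≤ κ := by
  obtain ⟨linearOrder, _, ord_eq⟩ := exists_ord_eq_type_lt α
  refine ⟨linearOrder, fun x ↦ ?_⟩
  rcases le_total ℵ₀ #α with infinite | countable
  · exact Order.lt_succ_iff.mp ((mk_Iic_lt x ord_eq infinite).trans_le hα)
  · exact (mk_set_le _).trans (countable.trans hκ)

theorem exists_notMem_and_notMem_of_mk_mul_lt {A : Set α} {f : α → Set β} {g : β → Set α}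
    (hA : #A * κ < #β) (hf : ∀ x ∈ A, #(f x) ≤ κ) (hg : ∀ y, #(g y) < #A) :
    ∃ x ∈ A, ∃ y, y ∉ f x ∧ x ∉ g y := by
  have mk_union_lt : #(⋃ x ∈ A, f x) < #β := calc
    #(⋃ x ∈ A, f x) ≤ #A * ⨆ x : A, #(f x) := mk_biUnion_le f A
    _ ≤ #A * κ := by gcongr; exact ciSup_le' fun x ↦ hf x x.2
    _ < #β := hA
  obtain ⟨y, hy⟩ := compl_nonempty_of_mk_lt_mk mk_union_lt
  obtain ⟨x, hxA, hxy⟩ := sdiff_nonempty_of_mk_lt_mk (hg y)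
  exact ⟨x, hxA, y, fun hyx ↦ hy (Set.mem_biUnion hxA hyx), hxy⟩

theorem axiom_of_symmetry_iff_not_CH_general (hκ : ℵ₀ ≤ κ) :
    (∀ f : α → Set α, (∀ x, #(f x) ≤ κ) → ∃ x y, y ∉ f x ∧ x ∉ f y) ↔ Order.succ κ < #α := by
  refine ⟨fun symmetry ↦ lt_of_not_ge fun hα ↦ ?_, fun hα f hf ↦ ?_⟩
  · obtain ⟨_, mk_Iic_le⟩ := exists_linearOrder_mk_Iic_le hκ hα
    obtain ⟨x, y, hyx, hxy⟩ := symmetry Set.Iic mk_Iic_le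
    exact (le_total y x).elim hyx hxy
  · obtain ⟨A, hA⟩ := le_mk_iff_exists_set.mp hα.le
    have mk_mul_lt : #A * κ < #α := by
      have le_succ := Order.le_succ κ
      rwa [hA, mul_eq_left (hκ.trans le_succ) le_succ (aleph0_pos.trans_le hκ).ne']
    have mk_lt (y : α) : #(f y) < #A := hA ▸ Order.lt_succ_of_le (hf y)
    obtain ⟨x, -, y, hxy⟩ := exists_notMem_and_notMem_of_mk_mul_lt mk_mul_lt (fun x _ ↦ hf x) mk_lt
    exact ⟨x, y, hxy⟩

/-- The axiom of symmetry is equivalent to the negation of the continuum hypothesis. -/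
theorem axiom_of_symmetry_iff_not_CH :
    (∀ f : ℝ → Set ℝ, (∀ x, (f x).Countable) →
      ∃ x y : ℝ, y ∉ f x ∧ x ∉ f y) ↔ #ℝ ≠ aleph 1 := by
  have aleph_one_le : aleph 1 ≤ #ℝ := mk_real ▸ aleph_one_le_continuum
  simpa only [le_aleph0_iff_set_countable, succ_aleph0, aleph_one_le.lt_iff_ne'] using
    axiom_of_symmetry_iff_not_CH_general (α := ℝ) le_rfl
end

section
/- If the continuum hypothesis holds, then the axiom of symmetry fails; indeed there exists a function f mapping each real number to a countable set of real numbers such that for all real numbers x and y, either x ∈ f(y) or y ∈ f(x). -/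
open Cardinal

open scoped Ordinal in
theorem mk_Iic_le_of_mk_le_succ {α : Type*} [LinearOrder α] [WellFoundedLT α] {κ : Cardinal}
    (hκ : ℵ₀ ≤ κ) (hα : #α ≤ Order.succ κ) (hord : ord #α = typeLT α) (x : α) :
    #(Set.Iic x) ≤ κ := by
  have mk_Iio_le : #(Set.Iio x) ≤ κ := Order.lt_succ_iff.mp ((mk_Iio_lt x hord).trans_le hα)
  calc
    #(Set.Iic x) = #(insert x (Set.Iio x) : Set α) := by rw [Set.Iio_insert]
    _ ≤ #(Set.Iio x) + 1 := mk_insert_le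
    _ ≤ κ + 1 := by gcongr
    _ = κ := add_one_eq hκ

theorem CH_implies_not_axiom_of_symmetry_general {α : Type*} {κ : Cardinal}
    (hκ : ℵ₀ ≤ κ) (hα : #α ≤ Order.succ κ) :
    ∃ f : α → Set α, (∀ x, #(f x) ≤ κ) ∧ ∀ x y : α, x ∈ f y ∨ y ∈ f x := by
  obtain ⟨_, _, hord⟩ := exists_ord_eq_type_lt α
  exact ⟨Set.Iic, mk_Iic_le_of_mk_le_succ hκ hα hord, le_total⟩

/-- If CH holds, then the axiom of symmetry fails: there is a function assigning to each
real a countable set of reals such that any two reals `x`, `y` satisfy `x ∈ f y` or `y ∈ f x`. -/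
theorem CH_implies_not_axiom_of_symmetry (hCH : #ℝ = aleph 1) :
    ∃ f : ℝ → Set ℝ, (∀ x, (f x).Countable) ∧ ∀ x y : ℝ, x ∈ f y ∨ y ∈ f x := by
  simpa only [le_aleph0_iff_set_countable] using
    CH_implies_not_axiom_of_symmetry_general le_rfl (hCH.trans succ_aleph0.symm).le
end

section
/- If the continuum hypothesis fails, then the axiom of symmetry holds: for every function f mapping each real number to a countable set of real numbers, there exist real numbers x and y such that y ∉ f(x) and x ∉ f(y). -/
open Cardinal

/-!
Choose a set `s` of reals of size `ℵ₁`. The sets `f x` for `x ∈ s` cover at most `ℵ₁` reals, so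
if CH fails they omit some `y`. Since `f y` is countable, it cannot contain all of `s`, and any
`x ∈ s` outside `f y` forms the required pair with `y`.
-/

theorem exists_notMem_and_notMem_of_mk_biUnion_lt {α β : Type*} {f : α → Set β} {g : β → Set α}
    {s : Set α} (hf : #(⋃ x ∈ s, f x) < #β) (hg : ∀ y, #(g y) < #s) :
    ∃ x ∈ s, ∃ y, y ∉ f x ∧ x ∉ g y := by
  obtain ⟨y, hy⟩ := compl_nonempty_of_mk_lt_mk hf
  obtain ⟨x, hxs, hxy⟩ := sdiff_nonempty_of_mk_lt_mk (hg y)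
  exact ⟨x, hxs, y, fun h => hy (Set.mem_biUnion hxs h), hxy⟩

theorem exists_notMem_and_notMem_of_forall_mk_lt {α : Type*} {c : Cardinal} (hc : ℵ₀ ≤ c)
    (hα : c < #α) {f : α → Set α} (hf : ∀ x, #(f x) < c) : ∃ x y, y ∉ f x ∧ x ∉ f y := by
  obtain ⟨s, rfl⟩ := le_mk_iff_exists_set.1 hα.le
  have hUnion : #(⋃ x ∈ s, f x) ≤ #s := calc
    #(⋃ x ∈ s, f x) ≤ #s * ⨆ x : s, #(f x) := mk_biUnion_le f s
    _ ≤ #s * #s := by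
      gcongr
      exact ciSup_le' fun x => (hf x).le
    _ = #s := mul_eq_self hc
  obtain ⟨x, -, y, hxy⟩ := exists_notMem_and_notMem_of_mk_biUnion_lt (hUnion.trans_lt hα) hf
  exact ⟨x, y, hxy⟩

theorem not_CH_implies_axiom_of_symmetry_general {α : Type*} (hα : ℵ₁ < #α) (f : α → Set α)
    (hf : ∀ x, (f x).Countable) : ∃ x y, y ∉ f x ∧ x ∉ f y :=
  exists_notMem_and_notMem_of_forall_mk_lt (aleph0_le_aleph 1) hα fun x =>
    lt_aleph_one_iff.2 (hf x).le_aleph0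

/-- If CH fails, then the axiom of symmetry holds. -/
theorem not_CH_implies_axiom_of_symmetry (hCH : #ℝ ≠ aleph 1) :
    ∀ f : ℝ → Set ℝ, (∀ x, (f x).Countable) → ∃ x y : ℝ, y ∉ f x ∧ x ∉ f y :=
  not_CH_implies_axiom_of_symmetry_general ((aleph_one_le_iff.2 aleph0_lt_mk).lt_of_ne hCH.symm)
end

section
/- If the continuum hypothesis holds, then there exists a set S of pairs of real numbers from the unit interval (a subset of [0,1] × [0,1]) such that for every y ∈ [0,1] the horizontal section {x ∈ [0,1] : (x,y) ∈ S} is countable, and for every x ∈ [0,1] the complement in [0,1] of the vertical section {y ∈ [0,1] : (x,y) ∈ S} is countable. -/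
/-!
Well-order an infinite set `A` by an order of type `ord #A`, and let `S` be the strict order
relation. Its horizontal sections are initial segments `Iio y` and the complements of its vertical
sections are closed initial segments `Iic x`, all of cardinality `< #A`. Under CH, `#[0,1] = ℵ₁`,
so `< #A` means countable. The order enters through `Cardinal.exists_rel_mk_fibers_lt`.
-/

open Cardinal

theorem CH_implies_sierpinski_set_general {α : Type*} {A : Set α} (hA : A.Infinite) :
    ∃ S ⊆ A ×ˢ A, (∀ y ∈ A, #{x ∈ A | (x, y) ∈ S} < #A) ∧
      (∀ x ∈ A, #(A \ {y ∈ A | (x, y) ∈ S} : Set α) < #A) := by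
  have : Infinite A := hA.to_subtype
  obtain ⟨r, h_compl_vertical, h_horizontal⟩ := exists_rel_mk_fibers_lt A
  let S : Set (α × α) := {p | ∃ (hx : p.1 ∈ A) (hy : p.2 ∈ A), r ⟨p.1, hx⟩ ⟨p.2, hy⟩}
  refine ⟨S, fun p ⟨hx, hy, _⟩ ↦ ⟨hx, hy⟩, fun y hy ↦ ?_, fun x hx ↦ ?_⟩
  · have section_eq : {x ∈ A | (x, y) ∈ S} = Subtype.val '' {x : A | r x ⟨y, hy⟩} := by
      ext x
      simp [S, hy]
    rw [section_eq]
    exact mk_image_le.trans_lt (h_horizontal ⟨y, hy⟩)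
  · have compl_section_eq :
        A \ {y ∈ A | (x, y) ∈ S} = Subtype.val '' {y : A | ¬ r ⟨x, hx⟩ y} := by
      ext y
      by_cases hy : y ∈ A <;> simp [S, hx, hy]
    rw [compl_section_eq]
    exact mk_image_le.trans_lt (h_compl_vertical ⟨x, hx⟩)

/-- If CH holds, there is a subset of the unit square all of whose horizontal sections are
countable and all of whose vertical sections are co-countable in `[0,1]`. -/
theorem CH_implies_sierpinski_set (hCH : #ℝ = aleph 1) :
    ∃ S : Set (ℝ × ℝ), S ⊆ Set.Icc (0:ℝ) 1 ×ˢ Set.Icc (0:ℝ) 1 ∧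
      (∀ y ∈ Set.Icc (0:ℝ) 1, {x ∈ Set.Icc (0:ℝ) 1 | (x, y) ∈ S}.Countable) ∧
      (∀ x ∈ Set.Icc (0:ℝ) 1, (Set.Icc (0:ℝ) 1 \ {y ∈ Set.Icc (0:ℝ) 1 | (x, y) ∈ S}).Countable) := by
  have mk_Icc : #(Set.Icc (0 : ℝ) 1) = aleph 1 := by rw [mk_Icc_real one_pos, ← mk_real, hCH]
  simpa only [mk_Icc, lt_aleph_one_iff, le_aleph0_iff_set_countable] using
    CH_implies_sierpinski_set_general (Set.Icc_infinite (zero_lt_one' ℝ))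
end
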